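/- arXiv:math/0511737 — 3 statements merged into one kernel-verified Lean document; each statement's English description precedes it below -/
import Mathlib

section
/- Let p be a prime, q a power of p, and G = GL_n(F_q). Let U be the subgroup of upper unitriangular matrices in G and D(U) = [U,U] its commutator subgroup. Let k be a field of characteristic different from p. Then the permutation module k[G/D(U)] = Ind_{D(U)}^G k is a progenerator of the category of k[G]-modules; that is, it is a finitely generated projective k[G]-module and every simple k[G]-module arises as a quotient of it. -/
/-!
The module `k[G/D(U)]` is generated by the trivial coset, and it is projective because `D(U)` is a
`p`-group, whose order is invertible in `k`. By Frobenius reciprocity, a simple module `S` is a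
quotient of it as soon as `S` has a nonzero `D(U)`-fixed vector; this is shown for every nonzero
`k[G]`-module.

The idea is that of restricting to mirabolic subgroups: one treats the columns of `U` from right
to left. A nonzero module over `GL_m(F) ⋉ F^m` has a nonzero vector fixed by some hyperplane of
`F^m`, and `GL_m(F)` moves that hyperplane to the standard one. Over a field `k` without enough
roots of unity, characters are replaced by a count of the lines in a plane
(`exists_fixed_by_line`), and the hyperplane is built up one coordinate at a time (`stage_step`).
The result (`exists_fixedBy_stage`) is a nonzero vector fixed by all elementary matrices
`1 + a E_{il}` with `i + 1 < l`. These generate a group containing all unitriangular matrices with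
zero superdiagonal (`mem_of_unitriangular`), hence `D(U)`.
-/

namespace UnipotentFixed

open Finset

/-! ### Lines in a plane -/

/-- Two commuting copies `X`, `Y` of the additive group of `F` act on a nonzero `W` on which
`q = |F|` is injective. Then one of the `q + 1` lines of the plane `F²` has a nonzero fixed
vector in `W`. Indeed, the sum over the lines `{(a, c a)}` of their norm elements is `q` plus
`∑_{a ≠ 0} X a` times the norm element of `Y`; if no line had a nonzero fixed vector, all these
norms would vanish on `W`, and so would `q`. -/
lemma exists_fixed_by_line {F G M : Type*} [Field F] [Fintype F] [Group G] [AddCommGroup M]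
    [DistribMulAction G M] (hM : ∀ m : M, Fintype.card F • m = 0 → m = 0)
    (X Y : F → G) (hX : ∀ a b, X (a + b) = X a * X b) (hY : ∀ a b, Y (a + b) = Y a * Y b)
    (hXY : ∀ a b, X a * Y b = Y b * X a) (W : AddSubgroup M)
    (hWX : ∀ a, ∀ w ∈ W, X a • w ∈ W) (hWY : ∀ a, ∀ w ∈ W, Y a • w ∈ W)
    (hW : ∃ w ∈ W, w ≠ 0) :
    ∃ w ∈ W, w ≠ 0 ∧ ((∀ b, Y b • w = w) ∨ ∃ c : F, ∀ a, (X a * Y (c * a)) • w = w) := by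
  classical
  obtain ⟨w, hw, hw0⟩ := hW
  by_contra! H
  apply hw0
  apply hM
  -- a sum over a copy of the additive group of `F` is fixed by that copy
  have avg : ∀ (Z : F → G), (∀ a b, Z (a + b) = Z a * Z b) → ∀ v : M, ∀ b,
      Z b • ∑ a, Z a • v = ∑ a, Z a • v := by
    intro Z hZ v b
    rw [smul_sum]
    simp_rw [← mul_smul, ← hZ]
    exact Equiv.sum_comp (Equiv.addLeft b) (fun a => Z a • v)
  have h1 : ∑ b, Y b • w = 0 := by
    by_contra h
    obtain ⟨⟨b, hb⟩, -⟩ := H _ (W.sum_mem fun b _ => hWY b w hw) h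
    exact hb (avg Y hY w b)
  have h2 : ∀ c : F, ∑ a, (X a * Y (c * a)) • w = 0 := by
    intro c
    by_contra h
    have hmem : ∑ a, (X a * Y (c * a)) • w ∈ W :=
      W.sum_mem fun a _ => by rw [mul_smul]; exact hWX _ _ (hWY _ _ hw)
    obtain ⟨-, h'⟩ := H _ hmem h
    obtain ⟨a, ha⟩ := h' c
    refine ha (avg (fun a => X a * Y (c * a)) (fun a b => ?_) w a)
    rw [mul_add, hX, hY, mul_assoc, mul_assoc, ← mul_assoc (X b), hXY, mul_assoc]
  have hX0 : X 0 = 1 := by simpa using hX 0 0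
  have hY0 : Y 0 = 1 := by simpa using hY 0 0
  have h3 : ∑ c : F, ∑ a, (X a * Y (c * a)) • w = 0 := by simp [h2]
  rw [sum_comm, ← add_sum_erase _ _ (mem_univ (0 : F))] at h3
  -- for `a ≠ 0`, the elements `c * a` run through `F`
  have h4 : ∀ a ∈ univ.erase (0 : F), ∑ c, (X a * Y (c * a)) • w = 0 := by
    intro a ha
    have ha0 : a ≠ 0 := (mem_erase.1 ha).1
    simp_rw [mul_smul, ← smul_sum]
    have h5 : ∑ c, Y (c * a) • w = ∑ b, Y b • w :=
      Equiv.sum_comp (Equiv.mulRight₀ a ha0) (fun b => Y b • w)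
    rw [h5, h1, smul_zero]
  rw [sum_eq_zero h4] at h3
  simpa [hX0, hY0] using h3

/-! ### Elementary matrices and their fixed vectors -/

variable {n : ℕ} {F : Type*} [Field F]

/-- The elementary matrix `1 + a E_{ij}`, `i ≠ j`, as an element of `GL_n(F)`. -/
def elemGL {i j : Fin n} (h : i ≠ j) (a : F) : GL (Fin n) F where
  val := Matrix.transvection i j a
  inv := Matrix.transvection i j (-a)
  val_inv := by rw [Matrix.transvection_mul_transvection_same _ _ h]; simp
  inv_val := by rw [Matrix.transvection_mul_transvection_same _ _ h]; simp

lemma elemGL_val {i j : Fin n} (h : i ≠ j) (a : F) :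
    (elemGL h a : Matrix (Fin n) (Fin n) F) = Matrix.transvection i j a := rfl

lemma elemGL_add {i j : Fin n} (h : i ≠ j) (a b : F) :
    elemGL h (a + b) = elemGL h a * elemGL h b := by
  ext1
  simp [elemGL_val, Matrix.transvection_mul_transvection_same _ _ h]

lemma elemGL_mul_neg {i j : Fin n} (h : i ≠ j) (a : F) :
    elemGL h a * elemGL h (-a) = 1 := by
  rw [← elemGL_add]
  ext1
  simp [elemGL_val]

lemma elemGL_comm {i j l m : Fin n} (h : i ≠ j) (h' : l ≠ m) (hjl : j ≠ l) (him : i ≠ m)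
    (a b : F) : elemGL h a * elemGL h' b = elemGL h' b * elemGL h a := by
  ext1
  simp [elemGL_val, Matrix.transvection, Matrix.add_mul, Matrix.mul_add, hjl, him.symm]
  abel

lemma elemGL_mul_elemGL {i j l : Fin n} (h : i ≠ j) (h' : j ≠ l) (h'' : i ≠ l) (a b : F) :
    elemGL h a * elemGL h' b = elemGL h' b * elemGL h a * elemGL h'' (a * b) := by
  ext1
  simp [elemGL_val, Matrix.transvection, Matrix.add_mul, Matrix.mul_add, h''.symm, h.symm]
  abel

lemma elemGL_mul_elemGL' {i j l : Fin n} (h : i ≠ j) (h' : j ≠ l) (h'' : i ≠ l) (a b : F) :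
    elemGL h' b * elemGL h a = elemGL h a * elemGL h' b * elemGL h'' (-(a * b)) := by
  rw [elemGL_mul_elemGL h h' h'', mul_assoc, elemGL_mul_neg, mul_one]

variable {M : Type*} [AddCommGroup M] [DistribMulAction (GL (Fin n) F) M]

variable (F M) in
/-- The vectors fixed by all the root subgroups `{1 + a E_{il}}` at positions `(i, l)`
satisfying `Z`; diagonal positions are ignored. -/
def fixedBy (Z : Fin n → Fin n → Prop) : AddSubgroup M where
  carrier := {w | ∀ i l (h : i ≠ l), Z i l → ∀ a : F, elemGL h a • w = w}
  zero_mem' := by simp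
  add_mem' hv hw i l h hZ a := by rw [smul_add, hv i l h hZ, hw i l h hZ]
  neg_mem' hv i l h hZ a := by rw [smul_neg, hv i l h hZ]

/-- The root subgroup at `(r, s)` preserves the vectors fixed at the positions `Z` as soon as every
nontrivial commutator of `1 + b E_{rs}` with a root element at a position in `Z` lies again at a
position in `Z`. -/
lemma smul_mem_fixedBy {Z : Fin n → Fin n → Prop} {r s : Fin n} (h : r ≠ s)
    (h1 : ∀ i l, Z i l → l ≠ r) (h2 : ∀ l, Z s l → Z r l) (b : F) {w : M}
    (hw : w ∈ fixedBy F M Z) : elemGL h b • w ∈ fixedBy F M Z := by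
  intro i l hil hZ a
  by_cases his : i = s
  · subst his
    have hrl : r ≠ l := (h1 _ _ hZ).symm
    rw [← mul_smul, elemGL_mul_elemGL' h hil hrl, mul_smul, mul_smul, hw _ _ hrl (h2 _ hZ),
      hw _ _ hil hZ]
  · rw [← mul_smul, elemGL_comm hil h (h1 _ _ hZ) his, mul_smul, hw _ _ hil hZ]

/-- The positions `(i, l)` (0-based) strictly above the superdiagonal which lie in a column to the
right of column `j`, or in column `j` and in one of the first `s` rows. -/
def stage (j s : ℕ) (i l : Fin n) : Prop :=
  i.val + 1 < l.val ∧ (j < l.val ∨ l.val = j ∧ i.val < s)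

/-- If the positions `stage j s` have a nonzero common fixed vector, so does one more position,
`(s, j)`. With `r = j - 1`, one line of the plane spanned by the root subgroups at `(s, j)` and
`(r, j)` has a nonzero fixed vector, and that line is conjugate to the root subgroup at `(s, j)` by
elementary matrices at `(s, r)` and `(r, s)`, which preserve the earlier fixed vectors. -/
lemma stage_step [Fintype F] (hM : ∀ m : M, Fintype.card F • m = 0 → m = 0) (j s : ℕ)
    (h : ∃ w ∈ fixedBy F M (stage (n := n) j s), w ≠ 0) :
    ∃ w ∈ fixedBy F M (stage (n := n) j (s + 1)), w ≠ 0 := by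
  by_cases hjs : j < n ∧ s + 1 < j
  swap
  · obtain ⟨w, hw, hw0⟩ := h
    refine ⟨w, fun i l hil hZ a => hw i l hil ?_ a, hw0⟩
    unfold stage at *
    have := l.2
    omega
  obtain ⟨hjn, hsj⟩ := hjs
  set J : Fin n := ⟨j, hjn⟩ with hJ
  set s' : Fin n := ⟨s, by omega⟩ with hs'
  set r : Fin n := ⟨j - 1, by omega⟩ with hr
  have hsJ : s' ≠ J := by simp [hs', hJ]; omega
  have hrJ : r ≠ J := by simp [hr, hJ]; omega
  have hsr : s' ≠ r := by simp [hs', hr]; omega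
  -- Commutators with the positions of `stage j s` stay in that set when the row is above `j` and
  -- the column is `j` or lies in `[s, j)`.
  have stab : ∀ {u v : Fin n} (huv : u ≠ v) (b : F) (w : M), u.val < j →
      (v = J ∨ (s ≤ v.val ∧ v.val < j)) → w ∈ fixedBy F M (stage (n := n) j s) →
      elemGL huv b • w ∈ fixedBy F M (stage (n := n) j s) := by
    intro u v huv b w hu hv hw
    refine smul_mem_fixedBy huv (fun i l hZ e => ?_) (fun l hZ => ?_) b hw
    · subst e; unfold stage at hZ; omega
    · unfold stage at *
      rcases hv with rfl | hv
      · simp only [hJ] at hZ; omega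
      · omega
  have finish : ∀ w ∈ fixedBy F M (stage (n := n) j s), w ≠ 0 →
      (∀ a : F, elemGL hsJ a • w = w) → ∃ w ∈ fixedBy F M (stage (n := n) j (s + 1)), w ≠ 0 := by
    intro w hw hw0 hfix
    refine ⟨w, fun i l hil hZ a => ?_, hw0⟩
    by_cases hst : stage j s i l
    · exact hw i l hil hst a
    · have hi : i = s' := by
        apply Fin.ext; simp only [hs']; unfold stage at *; omega
      have hl : l = J := by
        apply Fin.ext; simp only [hJ]; unfold stage at *; omega
      subst hi hl
      exact hfix a
  have transport : ∀ (g : GL (Fin n) F) (w : M),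
      (∀ a : F, ∃ x : GL (Fin n) F, x • w = w ∧ elemGL hsJ a * g = g * x) →
      ∀ a : F, elemGL hsJ a • g • w = g • w := by
    intro g w hx a
    obtain ⟨x, hx, e⟩ := hx a
    rw [← mul_smul, e, mul_smul, hx]
  obtain ⟨w, hw, hw0, hY | ⟨c, hc⟩⟩ := exists_fixed_by_line hM (elemGL hsJ) (elemGL hrJ)
    (elemGL_add hsJ) (elemGL_add hrJ)
    (fun a b => elemGL_comm hsJ hrJ hrJ.symm hsJ a b)
    (fixedBy F M (stage (n := n) j s))
    (fun a w hw => stab hsJ a w (by simp [hs']; omega) (Or.inl rfl) hw)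
    (fun a w hw => stab hrJ a w (by simp [hr]; omega) (Or.inl rfl) hw) h
  · refine finish (elemGL hsr.symm (-1) • elemGL hsr 1 • w)
      (stab _ _ _ (by simp [hr]; omega) (Or.inr (by simp [hs']; omega))
        (stab _ _ _ (by simp [hs']; omega) (Or.inr (by simp [hr]; omega)) hw)) ?_ ?_
    · simpa [smul_eq_zero_iff_eq] using hw0
    · rw [← mul_smul]
      refine transport _ _ fun a => ⟨elemGL hrJ a, hY a, ?_⟩
      have hneg : Matrix.single r J (-(a)) = -Matrix.single r J (a) := by
        ext; simp only [Matrix.single_apply, Matrix.neg_apply]; split_ifs <;> simp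
      ext1
      simp [elemGL_val, Matrix.transvection, Matrix.add_mul, Matrix.mul_add, hsJ.symm, hrJ.symm, hsr]
      rw [hneg]
      abel
  · refine finish (elemGL hsr.symm (-c) • w)
      (stab _ _ _ (by simp [hr]; omega) (Or.inr (by simp [hs']; omega)) hw) ?_ ?_
    · simpa [smul_eq_zero_iff_eq] using hw0
    · refine transport _ _ fun a => ⟨_, hc a, ?_⟩
      have hneg : Matrix.single r J (-(c * a)) = -Matrix.single r J (c * a) := by
        ext; simp only [Matrix.single_apply, Matrix.neg_apply]; split_ifs <;> simp
      ext1
      simp [elemGL_val, Matrix.transvection, Matrix.add_mul, Matrix.mul_add, hrJ.symm, hsr]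
      rw [hneg]
      abel

/-- Running `stage_step` through the columns from right to left and through each column from top to
bottom yields a nonzero vector fixed by all root subgroups strictly above the superdiagonal. -/
lemma exists_fixedBy_stage [Fintype F] [Nontrivial M]
    (hM : ∀ m : M, Fintype.card F • m = 0 → m = 0) :
    ∃ w : M, w ≠ 0 ∧ ∀ (i l : Fin n) (h : i ≠ l), i.val + 1 < l.val → ∀ a : F,
      elemGL h a • w = w := by
  have key : ∀ d, ∃ w ∈ fixedBy F M (stage (n := n) (n - d) 0), w ≠ 0 := by
    intro d
    induction d with
    | zero =>
      obtain ⟨w, hw⟩ := exists_ne (0 : M)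
      refine ⟨w, fun i l hil hZ a => ?_, hw⟩
      unfold stage at hZ
      omega
    | succ d ih =>
      have inner : ∀ s, ∃ w ∈ fixedBy F M (stage (n := n) (n - d) s), w ≠ 0 := by
        intro s
        induction s with
        | zero => exact ih
        | succ s ihs => exact stage_step hM _ _ ihs
      obtain ⟨w, hw, hw0⟩ := inner n
      refine ⟨w, fun i l hil hZ a => hw i l hil ?_ a, hw0⟩
      unfold stage at *
      omega
  obtain ⟨w, hw, hw0⟩ := key n
  refine ⟨w, hw0, fun i l h hil a => hw i l h ?_ a⟩
  unfold stage
  omega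

/-- A subgroup containing the root subgroups strictly above the superdiagonal contains every upper
unitriangular matrix with zero superdiagonal. The proof is by induction on the number of nonzero
off-diagonal entries: if `(s, j)` is one with `j` maximal, then row `j` of `g` is the `j`-th row of
the identity, so left multiplication by `1 - g_{sj} E_{sj}` only clears the entry `(s, j)`. -/
lemma mem_of_unitriangular {K : Subgroup (GL (Fin n) F)}
    (hK : ∀ (i l : Fin n) (h : i ≠ l), i.val + 1 < l.val → ∀ a : F, elemGL h a ∈ K)
    (g : GL (Fin n) F) (h0 : ∀ i j : Fin n, j < i → g.val i j = 0) (h1 : ∀ i, g.val i i = 1)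
    (h2 : ∀ i j : Fin n, i.val + 1 = j.val → g.val i j = 0) : g ∈ K := by
  classical
  induction hc : #{x : Fin n × Fin n | x.1 ≠ x.2 ∧ g.val x.1 x.2 ≠ 0}
    using Nat.strong_induction_on generalizing g with
  | _ N ih =>
  by_cases hne : ({x : Fin n × Fin n | x.1 ≠ x.2 ∧ g.val x.1 x.2 ≠ 0} : Finset _).Nonempty
  swap
  · have : g = 1 := by
      ext i j
      by_cases hij : i = j
      · subst hij; simp [h1]
      · by_contra hg
        exact hne ⟨(i, j), by simpa [hij] using hg⟩
    rw [this]
    exact K.one_mem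
  obtain ⟨⟨s, j⟩, hsj, hmax⟩ := exists_max_image _ (fun x => x.2) hne
  simp only [mem_filter, mem_univ, true_and] at hsj hmax
  obtain ⟨hsj, hg⟩ := hsj
  have hlt : s.val + 1 < j.val := by
    have := h0 s j
    have := h2 s j
    have : s.val ≠ j.val := fun h => hsj (Fin.ext h)
    simp only [Fin.lt_def] at *
    by_contra
    rcases lt_or_ge j.val s.val with h | h
    · tauto
    · exact hg (h2 s j (by omega))
  have hrow : ∀ l, l ≠ j → g.val j l = 0 := by
    intro l hl
    rcases lt_or_gt_of_ne hl with h | h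
    · exact h0 _ _ h
    · by_contra hn
      exact absurd (hmax (j, l) ⟨hl.symm, hn⟩) (not_le.2 h)
  set g' := elemGL hsj (-g.val s j) * g with hg'
  have hsame : ∀ a b, (a, b) ≠ (s, j) → g'.val a b = g.val a b := by
    intro a b hab
    rw [hg', Units.val_mul, elemGL_val]
    by_cases ha : a = s
    · subst ha
      have hb : b ≠ j := fun h => hab (by rw [h])
      simp [hrow b hb]
    · simp [ha]
  have hzero : g'.val s j = 0 := by
    rw [hg', Units.val_mul, elemGL_val]
    simp [h1]
  have hmem : g' ∈ K := by
    refine ih _ ?_ g' ?_ ?_ ?_ rfl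
    · rw [← hc]
      apply card_lt_card
      refine ⟨fun x hx => ?_, fun hsub => ?_⟩
      · simp only [mem_filter, mem_univ, true_and] at hx ⊢
        refine ⟨hx.1, ?_⟩
        have : (x.1, x.2) ≠ (s, j) := by
          intro e
          obtain ⟨e1, e2⟩ := Prod.mk.inj e
          rw [e1, e2] at hx
          exact hx.2 hzero
        rw [← hsame _ _ this]
        exact hx.2
      · have := @hsub (s, j) (by simp [hsj, hg])
        simp [hzero] at this
    · intro a b hab
      rw [hsame _ _ ?_, h0 _ _ hab]
      rintro ⟨⟩
      simp only [Fin.lt_def] at hab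
      omega
    · intro a
      rw [hsame _ _ ?_, h1]
      rintro ⟨⟩
      exact hsj rfl
    · intro a b hab
      rw [hsame _ _ ?_, h2 _ _ hab]
      rintro ⟨⟩
      omega
  have := K.mul_mem (K.inv_mem (hK s j hsj hlt (-g.val s j))) hmem
  simpa [hg'] using this


/-! ### The permutation module -/

section Module

variable {k G : Type*} [Field k] [Group G] (H : Subgroup G)

/-- The trivial coset `H`, as a basis vector of the permutation module `k[G/H]`. -/
noncomputable def basePoint (k : Type*) [Field k] (H : Subgroup G) :
    (Representation.ofMulAction k G (G ⧸ H)).asModule :=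
  (Representation.ofMulAction k G (G ⧸ H)).asModuleEquiv.symm
    (MonoidAlgebra.single ((1 : G) : G ⧸ H) 1)

lemma single_smul_basePoint (g : G) (r : k) :
    MonoidAlgebra.single g r • basePoint k H =
      (Representation.ofMulAction k G (G ⧸ H)).asModuleEquiv.symm
        (MonoidAlgebra.single (g : G ⧸ H) r) := by
  apply (Representation.ofMulAction k G (G ⧸ H)).asModuleEquiv.injective
  rw [Representation.asModuleEquiv_map_smul]
  simp [basePoint, MonoidAlgebra.smul_single]

lemma exists_smul_basePoint (x : (Representation.ofMulAction k G (G ⧸ H)).asModule) :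
    ∃ r : MonoidAlgebra k G, r • basePoint k H = x := by
  obtain ⟨x, rfl⟩ := (Representation.ofMulAction k G (G ⧸ H)).asModuleEquiv.symm.surjective x
  induction x using MonoidAlgebra.induction_linear with
  | zero => exact ⟨0, by simp⟩
  | add x y hx hy =>
    obtain ⟨r, hr⟩ := hx
    obtain ⟨s, hs⟩ := hy
    exact ⟨r + s, by rw [add_smul, hr, hs, map_add]⟩
  | single m r =>
    obtain ⟨g, rfl⟩ := QuotientGroup.mk_surjective m
    exact ⟨MonoidAlgebra.single g r, single_smul_basePoint H g r⟩

/-- Frobenius reciprocity: an `H`-fixed vector `m` of a `k[G]`-module is the image of the trivial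
coset under a `k[G]`-linear map from `k[G/H]`. -/
lemma exists_linearMap_of_fixed {S : Type*} [AddCommGroup S] [Module (MonoidAlgebra k G) S] (m : S)
    (hm : ∀ h ∈ H, MonoidAlgebra.of k G h • m = m) :
    ∃ f : (Representation.ofMulAction k G (G ⧸ H)).asModule →ₗ[MonoidAlgebra k G] S,
      f (basePoint k H) = m := by
  have key : ∀ r : MonoidAlgebra k G, r • basePoint k H = 0 → r • m = 0 := by
    classical
    -- `Φ` is the additive map `c [gH] ↦ c g • m`, well defined because `m` is `H`-fixed.
    let φ : G ⧸ H → S := Quotient.lift (fun g : G => MonoidAlgebra.of k G g • m) (by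
      intro a b hab
      have hab' : a⁻¹ * b ∈ H := QuotientGroup.leftRel_apply.1 hab
      have := hm _ hab'
      calc MonoidAlgebra.of k G a • m
          = MonoidAlgebra.of k G a • MonoidAlgebra.of k G (a⁻¹ * b) • m := by rw [this]
        _ = MonoidAlgebra.of k G b • m := by rw [← mul_smul, ← map_mul]; simp)
    let Φ : MonoidAlgebra k (G ⧸ H) →+ S :=
      (Finsupp.liftAddHom (fun x : G ⧸ H =>
        ({ toFun := fun c : k => algebraMap k (MonoidAlgebra k G) c • φ x
           map_zero' := by simp
           map_add' := by intro a b; rw [map_add, add_smul] } : k →+ S))).comp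
        (MonoidAlgebra.coeffAddEquiv (R := k) (M := G ⧸ H)).toAddMonoidHom
    have hΦ : ∀ r : MonoidAlgebra k G, Φ
        ((Representation.ofMulAction k G (G ⧸ H)).asModuleEquiv (r • basePoint k H)) = r • m := by
      intro r
      induction r using MonoidAlgebra.induction_linear with
      | zero => simp
      | add x y hx hy => rw [add_smul, map_add, map_add, hx, hy, add_smul]
      | single g c =>
        rw [single_smul_basePoint]
        simp only [LinearEquiv.apply_symm_apply]
        have : Φ (MonoidAlgebra.single (g : G ⧸ H) c) =
            algebraMap k (MonoidAlgebra k G) c • MonoidAlgebra.of k G g • m := by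
          simp [Φ, φ]
        rw [this, ← mul_smul]
        simp
    intro r hr
    rw [← hΦ, hr]
    simp
  let π := LinearMap.toSpanSingleton (MonoidAlgebra k G) _ (basePoint k H)
  have hπ : Function.Surjective π := fun x => exists_smul_basePoint H x
  have hker : LinearMap.ker π ≤ LinearMap.ker (LinearMap.toSpanSingleton (MonoidAlgebra k G) S m) :=
    fun r hr => key r hr
  refine ⟨((LinearMap.ker π).liftQ _ hker) ∘ₗ (π.quotKerEquivOfSurjective hπ).symm.toLinearMap, ?_⟩
  have : basePoint k H = π.quotKerEquivOfSurjective hπ (Submodule.Quotient.mk 1) := by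
    simp [π]
  rw [this]
  simp

lemma finite_permutation :
    Module.Finite (MonoidAlgebra k G) (Representation.ofMulAction k G (G ⧸ H)).asModule :=
  Module.Finite.of_surjective
    (LinearMap.toSpanSingleton (MonoidAlgebra k G) _ (basePoint k H))
    (fun x => exists_smul_basePoint H x)

/-- If `|H|` is invertible in `k`, the averaging idempotent of `H` splits `k[G] → k[G/H]`. -/
lemma projective_permutation [Finite H] (hH : (Nat.card H : k) ≠ 0) :
    Module.Projective (MonoidAlgebra k G)
      (Representation.ofMulAction k G (G ⧸ H)).asModule := by
  classical
  cases nonempty_fintype H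
  let e : MonoidAlgebra k G := ∑ h : H, MonoidAlgebra.single (h : G) ((Nat.card H : k)⁻¹)
  obtain ⟨s, hs⟩ := exists_linearMap_of_fixed (k := k) H e (by
    intro h hh
    simp only [e, smul_eq_mul, Finset.mul_sum, MonoidAlgebra.of_apply,
      MonoidAlgebra.single_mul_single, one_mul]
    exact Equiv.sum_comp (Equiv.mulLeft (⟨h, hh⟩ : H))
      (fun x : H => MonoidAlgebra.single (x : G) ((Nat.card H : k)⁻¹)))
  refine Module.Projective.of_split s
    (LinearMap.toSpanSingleton (MonoidAlgebra k G) _ (basePoint k H)) ?_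
  have he : e • basePoint k H = basePoint k H := by
    have : ∀ h : H, ((h : G) : G ⧸ H) = ((1 : G) : G ⧸ H) := fun h =>
      QuotientGroup.eq.2 (by simp)
    simp only [e, Finset.sum_smul, single_smul_basePoint, this, ← map_sum]
    rw [Finset.sum_const, ← Nat.cast_smul_eq_nsmul k, MonoidAlgebra.smul_single, Finset.card_univ,
      ← Nat.card_eq_fintype_card, smul_eq_mul, mul_inv_cancel₀ hH]
    rfl
  ext x
  obtain ⟨r, rfl⟩ := exists_smul_basePoint H x
  simp [hs, he]

end Module

/-! ### Upper unitriangular matrices -/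

/-- A unitriangular `g` has `(g - 1) ^ n = 0` by Cayley-Hamilton, so `g ^ (p ^ n) = 1` as
`n ≤ p ^ n`. -/
lemma isPGroup_unitriangular {n : ℕ} {F : Type*} [Field F] (p : ℕ) [Fact p.Prime] [CharP F p]
    (U : Subgroup (GL (Fin n) F))
    (hU : ∀ g ∈ U, (∀ i j : Fin n, j < i → g.val i j = 0) ∧ (∀ i, g.val i i = 1)) :
    IsPGroup p U := by
  rintro ⟨g, hg⟩
  obtain ⟨h0, h1⟩ := hU g hg
  have hp : p.Prime := Fact.out
  refine ⟨n, ?_⟩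
  have hnil : (g.val - 1) ^ n = 0 := by
    have := Matrix.aeval_self_charpoly g.val
    rw [Matrix.charpoly_of_isUpperTriangular g.val (fun i j h => h0 i j h)] at this
    simpa [h1] using this
  rcases Nat.eq_zero_or_pos n with rfl | hn
  · exact Subsingleton.elim _ _
  have : Nonempty (Fin n) := ⟨⟨0, hn⟩⟩
  have h2 : g.val ^ p ^ n - 1 = 0 := by
    have := sub_pow_char_pow_of_commute (p := p) (n := n) (Commute.one_right g.val)
    rw [one_pow] at this
    rw [← this]
    exact pow_eq_zero_of_le (Nat.lt_pow_self hp.one_lt).le hnil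
  ext1
  ext1
  simpa [sub_eq_zero] using h2

lemma superdiag_mul {n : ℕ} {F : Type*} [Field F] {g h : Matrix (Fin n) (Fin n) F}
    (hg : (∀ i j : Fin n, j < i → g i j = 0) ∧ ∀ i, g i i = 1)
    (hh : (∀ i j : Fin n, j < i → h i j = 0) ∧ ∀ i, h i i = 1)
    {i j : Fin n} (hij : i.val + 1 = j.val) : (g * h) i j = g i j + h i j := by
  have hne : i ≠ j := fun e => by subst e; omega
  rw [Matrix.mul_apply, Finset.sum_eq_add_of_mem i j (Finset.mem_univ _) (Finset.mem_univ _) hne,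
    hg.2, hh.2, one_mul, mul_one, add_comm]
  rintro l - ⟨hli, hlj⟩
  rcases lt_or_gt_of_ne hli with h' | h'
  · rw [hg.1 _ _ h', zero_mul]
  · rw [hh.1 l j ?_, mul_zero]
    have : l.val ≠ j.val := fun e => hlj (Fin.ext e)
    simp only [Fin.lt_def] at *
    omega

open scoped commutatorElement in
/-- The superdiagonal entries are additive on `U`, so they vanish on commutators. -/
lemma commutator_le_of_elemGL_mem {n : ℕ} {F : Type*} [Field F] {U K : Subgroup (GL (Fin n) F)}
    (hU : ∀ g ∈ U, (∀ i j : Fin n, j < i → g.val i j = 0) ∧ (∀ i, g.val i i = 1))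
    (hK : ∀ (i l : Fin n) (h : i ≠ l), i.val + 1 < l.val → ∀ a : F, elemGL h a ∈ K) :
    ⁅U, U⁆ ≤ K := by
  rw [Subgroup.commutator_le]
  intro x hx y hy
  have hc : ⁅x, y⁆ ∈ U := by
    rw [commutatorElement_def]
    exact U.mul_mem (U.mul_mem (U.mul_mem hx hy) (U.inv_mem hx)) (U.inv_mem hy)
  refine mem_of_unitriangular hK _ (hU _ hc).1 (hU _ hc).2 fun i j hij => ?_
  have e : ⁅x, y⁆ * (y * x) = x * y := by rw [commutatorElement_def]; group
  have e' := congrArg (fun g : GL (Fin n) F => g.val i j) e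
  simp only [Units.val_mul] at e'
  rw [superdiag_mul (hU _ hc) (by simpa using hU _ (U.mul_mem hy hx)) hij,
    superdiag_mul (hU _ hy) (hU _ hx) hij, superdiag_mul (hU _ hx) (hU _ hy) hij] at e'
  linear_combination e'

end UnipotentFixed

open UnipotentFixed


/-- Let `p` be a prime, `q` a power of `p`, and `G = GL_n(F_q)` (here `F` is a
finite field of characteristic `p`). Let `U` be the subgroup of upper unitriangular matrices in
`G` and `D(U) = [U,U] = ⁅U,U⁆` its commutator subgroup. Let `k` be a field of characteristic
different from `p`. Then the permutation module `k[G/D(U)] = Ind_{D(U)}^G k` is a progenerator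
of the category of `k[G]`-modules: it is a finitely generated projective `k[G]`-module and
every simple `k[G]`-module arises as a quotient of it. -/
theorem stmt0 (p : ℕ) [Fact p.Prime] (F : Type) [Field F] [Fintype F] [CharP F p]
    (k : Type) [Field k] (hk : ringChar k ≠ p)
    (n : ℕ) (U : Subgroup (GL (Fin n) F))
    (hU : ∀ g : GL (Fin n) F, g ∈ U ↔
      ((∀ i j : Fin n, j < i → (g : Matrix (Fin n) (Fin n) F) i j = 0) ∧
       (∀ i : Fin n, (g : Matrix (Fin n) (Fin n) F) i i = 1))) :
    Module.Finite (MonoidAlgebra k (GL (Fin n) F))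
      (Representation.ofMulAction k (GL (Fin n) F) (GL (Fin n) F ⧸ ⁅U, U⁆)).asModule ∧
    Module.Projective (MonoidAlgebra k (GL (Fin n) F))
      (Representation.ofMulAction k (GL (Fin n) F) (GL (Fin n) F ⧸ ⁅U, U⁆)).asModule ∧
    (∀ (S : Type) [AddCommGroup S] [Module (MonoidAlgebra k (GL (Fin n) F)) S],
      IsSimpleModule (MonoidAlgebra k (GL (Fin n) F)) S →
      ∃ f : (Representation.ofMulAction k (GL (Fin n) F)
          (GL (Fin n) F ⧸ ⁅U, U⁆)).asModule →ₗ[MonoidAlgebra k (GL (Fin n) F)] S,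
        Function.Surjective f) := by
  have hp : p.Prime := Fact.out
  have hU' : ∀ g ∈ U, (∀ i j : Fin n, j < i → g.val i j = 0) ∧ (∀ i, g.val i i = 1) :=
    fun g hg => (hU g).1 hg
  have hpk : (p : k) ≠ 0 := by
    intro h
    rcases (Nat.dvd_prime hp).1 (ringChar.dvd h) with h1 | h1
    · exact CharP.ringChar_ne_one h1
    · exact hk h1
  refine ⟨finite_permutation _, projective_permutation _ ?_, ?_⟩
  · have hle : ⁅U, U⁆ ≤ U := Subgroup.commutator_le_self U
    obtain ⟨d, hd⟩ := IsPGroup.iff_card.1 ((isPGroup_unitriangular p U hU').to_le hle)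
    rw [hd, Nat.cast_pow]
    exact pow_ne_zero _ hpk
  · intro S _ _ hS
    have hS' : Nontrivial S := IsSimpleModule.nontrivial (MonoidAlgebra k (GL (Fin n) F)) S
    let _ : DistribMulAction (GL (Fin n) F) S :=
      DistribMulAction.compHom S (MonoidAlgebra.of k (GL (Fin n) F))
    have hq : ∀ m : S, Fintype.card F • m = 0 → m = 0 := by
      intro m hm
      obtain ⟨d, -, hd⟩ := FiniteField.card F p
      have hqk : (Fintype.card F : k) ≠ 0 := by
        rw [hd, Nat.cast_pow]
        exact pow_ne_zero _ hpk
      have h1 : algebraMap k (MonoidAlgebra k (GL (Fin n) F)) (Fintype.card F : k) • m = 0 := by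
        rw [map_natCast, Nat.cast_smul_eq_nsmul, hm]
      have h2 := congrArg
        (fun v => algebraMap k (MonoidAlgebra k (GL (Fin n) F)) (Fintype.card F : k)⁻¹ • v) h1
      simpa only [← mul_smul, ← map_mul, inv_mul_cancel₀ hqk, map_one, one_smul, smul_zero]
        using h2
    obtain ⟨w, hw0, hw⟩ := exists_fixedBy_stage (n := n) (F := F) (M := S) hq
    have hfix : ⁅U, U⁆ ≤ MulAction.stabilizer (GL (Fin n) F) w :=
      commutator_le_of_elemGL_mem hU' fun i l h hil a => hw i l h hil a
    obtain ⟨f, hf⟩ := exists_linearMap_of_fixed (k := k) ⁅U, U⁆ w (fun h hh => hfix hh)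
    refine ⟨f, LinearMap.surjective_of_ne_zero ?_⟩
    rintro rfl
    exact hw0 (by rw [← hf, LinearMap.zero_apply])
end

section
/- Let O be a principal ideal domain whose fraction field has characteristic zero, let H be a finite abelian group, and let g_1,…,g_m ∈ H. Then for every i, the i-th cohomology module of the Koszul complex Z(g_1−1,…,g_m−1) of O[H]-modules (the tensor product over O[H] of the two-term complexes O[H] →(g_j−1)→ O[H]) is a finitely generated free O-module. -/
/-!
Put `A = O[H]`, `G_k = ⟨g_1, …, g_k⟩` and let `I_k` be the ideal generated by `g_1 - 1, …, g_k - 1`,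
so that `A ⧸ I_k ≅ O[H ⧸ G_k]` (`mem_span_iff`). The claim proved by induction on `k` is that the
cohomology of the Koszul complex on the first `k` elements is finite free over `A ⧸ I_k`, which is
torsion-free over `O`; a finitely generated torsion-free module over a principal ideal domain is
free.

Tensoring a complex `C` with `A → A`, multiplication by `x = g - 1`, yields short exact sequences
`0 → coker (x on H(C)) → H(C ⊗ Z(x)) → ker (x on H(C)) → 0`. When `H(C)` is free over `A ⧸ I_k`, both
ends are free over `A ⧸ I_{k+1}`: for the kernel this holds because in `O[H ⧸ G_k]` the elements
`g - 1` and the norm `N` of `g` generate the annihilators of each other (`exists_mul_normElt`,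
`exists_mul_sub_one`). Koszul homotopies show that `I_{k+1}` kills the middle term, so the sequence
splits. This is `CohomFree.cone`, phrased with explicit cycles rather than quotient modules.

The grading plays no role in this argument, so it is carried out for the total complex `totalD`,
indexed by all subsets of `Fin m`; the degree `i` cohomology embeds in the total one. New elements
are added at the front of the sequence, since the Koszul signs are simplest there.
-/


section KoszulModel

variable (O : Type*) [CommRing O] (A : Type*) [CommRing A] [Algebra O A]

/-- Index set of the degree `i` part of the Koszul complex on `m` elements:
subsets of `{0,…,m-1}` of cardinality `i` (empty for `i < 0` or `i > m`). -/
abbrev KIdx (m : ℕ) (i : ℤ) : Type := {T : Finset (Fin m) // (T.card : ℤ) = i}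

/-- Degree `i` term of the Koszul complex `Z(a_1) ⊗_A ⋯ ⊗_A Z(a_m)` on `m` elements of `A`,
realized as the free `A`-module on subsets of `{0,…,m-1}` of cardinality `i`
(the basis element indexed by `T` corresponding to the tensor of the degree `1` basis vectors
in the factors from `T` and the degree `0` basis vectors elsewhere). -/
abbrev KT (m : ℕ) (i : ℤ) : Type _ := KIdx m i → A

/-- The Koszul differential from degree `i` to degree `i + 1` (as an `O`-linear map),
for the sequence `a : Fin m → A`:
`(d f) T = ∑_{j ∈ T} (-1)^{#{k ∈ T | k < j}} · (a j) · f (T \ {j})`.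
This is the differential of the tensor product complex `Z(a_1) ⊗_A ⋯ ⊗_A Z(a_m)`
(with the standard Koszul signs). -/
noncomputable def kdAux (m : ℕ) (a : Fin m → A) (i : ℤ) :
    KT A m i →ₗ[O] KT A m (i + 1) where
  toFun f T := ∑ j ∈ T.1.attach,
      (-1 : A) ^ ((T.1.filter (fun k => k < j.1)).card) * a j.1 *
        f ⟨T.1.erase j.1, by
          have h2 : ((T : Finset (Fin m)).card : ℤ) = i + 1 := T.2
          have h1 : 1 ≤ (T : Finset (Fin m)).card := Finset.card_pos.mpr ⟨j.1, j.2⟩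
          rw [Finset.card_erase_of_mem j.2, Nat.cast_sub h1]
          omega⟩
  map_add' f g := by
    funext T
    simp only [Pi.add_apply, mul_add, Finset.sum_add_distrib]
  map_smul' c f := by
    funext T
    simp only [Pi.smul_apply, RingHom.id_apply, Finset.smul_sum]
    exact Finset.sum_congr rfl fun j _ => by rw [mul_smul_comm]

/-- The Koszul differential `KT i ⟶ KT j` (it is zero unless `j = i + 1`). -/
noncomputable def kd (m : ℕ) (a : Fin m → A) (i j : ℤ) :
    KT A m i →ₗ[O] KT A m j :=
  if h : j = i + 1 then (by subst h; exact kdAux O A m a i) else 0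

/-- The `i`-th cohomology of the Koszul complex: the kernel of the differential leaving
degree `i`, modulo the image of the differential entering degree `i`. -/
noncomputable abbrev koszulCohomology (m : ℕ) (a : Fin m → A) (i : ℤ) :=
  LinearMap.ker (kd O A m a i (i + 1)) ⧸
    Submodule.comap (LinearMap.ker (kd O A m a i (i + 1))).subtype
      (LinearMap.range (kd O A m a (i - 1) i))

end KoszulModel

/-! ### Differential modules with free cohomology -/

section Abstract

variable {A : Type*} [CommRing A] {M L : Type*} [AddCommGroup M] [Module A M]
  [AddCommGroup L] [Module A L]

/-- The endomorphism `D` of `M` squares to zero, each element of `I` acts on `(M, D)`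
null-homotopically, and the cohomology `ker D / im D` is a finite free `A ⧸ I`-module. The last
condition is phrased at the level of cycles: the classes of `h i` generate the cohomology, and a
linear combination of them is a boundary only if its coefficients lie in `I` (the converse
follows from the homotopies). No grading is involved. -/
structure CohomFree (I : Ideal A) (D : M →ₗ[A] M) : Prop where
  sq : ∀ z, D (D z) = 0
  homotopy : ∀ y ∈ I, ∃ s : M →ₗ[A] M, ∀ z, D (s z) + s (D z) = y • z
  basis : ∃ (n : ℕ) (h : Fin n → M), (∀ i, D (h i) = 0) ∧
    (∀ z, D z = 0 → ∃ (c : Fin n → A) (w : M), z = ∑ i, c i • h i + D w) ∧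
    (∀ (c : Fin n → A) (w : M), ∑ i, c i • h i = D w → ∀ i, c i ∈ I)

theorem CohomFree.kill {I : Ideal A} {D : M →ₗ[A] M} (hD : CohomFree I D) {y : A} (hy : y ∈ I)
    {z : M} (hz : D z = 0) : ∃ w, y • z = D w := by
  obtain ⟨s, hs⟩ := hD.homotopy y hy
  exact ⟨s z, by rw [← hs z, hz, map_zero, add_zero]⟩

theorem CohomFree.kill_sum {I : Ideal A} {D : M →ₗ[A] M} (hD : CohomFree I D) {n : ℕ}
    {c : Fin n → A} (hc : ∀ i, c i ∈ I) {h : Fin n → M} (hh : ∀ i, D (h i) = 0) :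
    ∃ w, ∑ i, c i • h i = D w := by
  choose w hw using fun i => hD.kill (hc i) (hh i)
  exact ⟨∑ i, w i, by rw [map_sum]; exact Finset.sum_congr rfl fun i _ => hw i⟩

theorem CohomFree.congr {I : Ideal A} {D : M →ₗ[A] M} (hD : CohomFree I D) (D' : L →ₗ[A] L)
    (e : L ≃ₗ[A] M) (he : ∀ z, e (D' z) = D (e z)) : CohomFree I D' := by
  have he' : ∀ z, e.symm (D z) = D' (e.symm z) := fun z => by
    apply e.injective; rw [he]; simp
  refine ⟨fun z => e.injective (by rw [he, he, hD.sq, map_zero]), fun y hy => ?_, ?_⟩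
  · obtain ⟨s, hs⟩ := hD.homotopy y hy
    refine ⟨e.symm.toLinearMap ∘ₗ s ∘ₗ e.toLinearMap, fun z => e.injective ?_⟩
    simp [he, hs]
  · obtain ⟨n, h, h0, h1, h2⟩ := hD.basis
    refine ⟨n, fun i => e.symm (h i), fun i => by rw [← he', h0, map_zero], fun z hz => ?_,
      fun c w hw => h2 c (e w) ?_⟩
    · obtain ⟨c, w, hw⟩ := h1 (e z) (by rw [← he, hz, map_zero])
      refine ⟨c, e.symm w, e.injective ?_⟩
      simp [he, hw]
    · rw [← he, ← hw]; simp

/-- The differential on `M × M` of the tensor product of `(M, D)` with the two-term complex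
`A → A` given by multiplication by `x`. -/
def coneD (x : A) (D : M →ₗ[A] M) : (M × M) →ₗ[A] (M × M) :=
  (D ∘ₗ LinearMap.fst A M M).prod (x • LinearMap.fst A M M - D ∘ₗ LinearMap.snd A M M)

@[simp] theorem coneD_apply (x : A) (D : M →ₗ[A] M) (p : M × M) :
    coneD x D p = (D p.1, x • p.1 - D p.2) := rfl

theorem coneD_homotopy {I : Ideal A} {D : M →ₗ[A] M} (hD : CohomFree I D) (x : A) {y : A}
    (hy : y ∈ I ⊔ Ideal.span {x}) :
    ∃ s : (M × M) →ₗ[A] (M × M), ∀ z, coneD x D (s z) + s (coneD x D z) = y • z := by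
  obtain ⟨a, ha, b, hb, rfl⟩ := Submodule.mem_sup.1 hy
  obtain ⟨r, rfl⟩ := Ideal.mem_span_singleton'.1 hb
  obtain ⟨s, hs⟩ := hD.homotopy a ha
  refine ⟨(s ∘ₗ LinearMap.fst A M M).prod (-(s ∘ₗ LinearMap.snd A M M)) +
    r • (LinearMap.snd A M M).prod 0, fun z => ?_⟩
  ext
  · simp [← hs, add_smul, mul_smul, smul_sub]
    abel
  · simp [← hs, add_smul, mul_smul, smul_sub, smul_comm r x]
    abel

/-- If in `A ⧸ I` the annihilator of `x` is generated by `N` and the annihilator of `N` is generated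
by `x`, then both the kernel and the cokernel of `x` on `A ⧸ I` are isomorphic to
`A ⧸ (I ⊔ (x))`. The cohomology of the cone is an extension of a sum of such kernels by a sum of
such cokernels, and it is killed by `I ⊔ (x)`, so the extension splits. Concretely, a basis
consists of the classes of `(0, h i)` and of `(N • h i, w i)`, where `D (w i) = (x * N) • h i`. -/
theorem CohomFree.cone {I : Ideal A} {D : M →ₗ[A] M} (hD : CohomFree I D) {x N : A}
    (hxN : x * N ∈ I) (hann : ∀ c, c * x ∈ I → ∃ e, c - e * N ∈ I)
    (hannN : ∀ c, c * N ∈ I → c ∈ I ⊔ Ideal.span {x}) :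
    CohomFree (I ⊔ Ideal.span {x}) (coneD x D) := by
  have hsq : ∀ z, coneD x D (coneD x D z) = 0 := fun z => by
    ext <;> simp [hD.sq]
  obtain ⟨n, h, h0, h1, h2⟩ := hD.basis
  choose w hw using fun i => hD.kill hxN (h0 i)
  have hq : ∀ i, coneD x D (N • h i, w i) = 0 := fun i => by
    simp [h0, ← hw, mul_smul]
  have hp : ∀ i, coneD x D (0, h i) = 0 := fun i => by simp [h0]
  refine ⟨hsq, fun y hy => coneD_homotopy hD x hy, n + n,
    Fin.append (fun i => (0, h i)) (fun i => (N • h i, w i)), ?_, ?_, ?_⟩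
  · intro i
    refine Fin.addCases (fun i => ?_) (fun i => ?_) i
    · rw [Fin.append_left, hp]
    · rw [Fin.append_right, hq]
  · rintro ⟨f, k⟩ hz
    have hf : D f = 0 := congrArg Prod.fst hz
    have hk : x • f = D k := sub_eq_zero.1 (congrArg Prod.snd hz)
    obtain ⟨c, u, hu⟩ := h1 f hf
    have hc : ∀ i, c i * x ∈ I := by
      refine h2 _ (k - x • u) ?_
      rw [map_sub, ← hk, hu, smul_add, map_smul, add_sub_cancel_right, Finset.smul_sum]
      exact Finset.sum_congr rfl fun i _ => by rw [mul_comm, mul_smul]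
    choose e he using fun i => hann _ (hc i)
    obtain ⟨v, hv⟩ := hD.kill_sum he h0
    have hfe : f = ∑ i, e i • N • h i + D (v + u) := by
      rw [hu, map_add, ← hv, ← add_assoc, ← Finset.sum_add_distrib]
      congr 1
      exact Finset.sum_congr rfl fun i _ => by rw [smul_smul, ← add_smul]; congr 1; ring
    have hk' : D (k - ∑ i, e i • w i - x • (v + u)) = 0 := by
      rw [map_sub, map_sub, ← hk, map_sum, map_smul]
      nth_rw 1 [hfe]
      rw [smul_add, Finset.smul_sum]
      have : ∑ i, x • e i • N • h i = ∑ i, D (e i • w i) :=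
        Finset.sum_congr rfl fun i _ => by
          rw [map_smul, ← hw, smul_comm x (e i), mul_smul]
      rw [this]; abel
    obtain ⟨c', t, ht⟩ := h1 _ hk'
    refine ⟨Fin.append c' e, (v + u, -t), ?_⟩
    rw [Fin.sum_univ_add]
    simp only [Fin.append_left, Fin.append_right]
    ext
    · simp only [Prod.fst_add, Prod.fst_sum, Prod.smul_fst, smul_zero, Finset.sum_const_zero,
        zero_add, coneD_apply]
      exact hfe
    · simp only [Prod.snd_add, Prod.snd_sum, Prod.smul_snd, coneD_apply, map_neg, sub_neg_eq_add]
      rw [sub_sub, sub_eq_iff_eq_add] at ht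
      rw [ht]; abel
  · rintro c ⟨u, v⟩ hcw
    rw [Fin.sum_univ_add] at hcw
    simp only [Fin.append_left, Fin.append_right] at hcw
    have hright : ∀ i, c (Fin.natAdd n i) ∈ I ⊔ Ideal.span {x} := fun i => by
      apply hannN
      refine h2 (fun i => c (Fin.natAdd n i) * N) u ?_ i
      have := congrArg Prod.fst hcw
      simpa [Prod.fst_sum, mul_smul] using this
    -- The ideal `I ⊔ (x)` kills the cohomology, so the part of the relation that involves the
    -- elements `(N • h i, w i)` is a boundary.
    have hbd : ∃ p, ∑ i, c (Fin.natAdd n i) • (N • h i, w i) = coneD x D p := by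
      choose p hp using fun i => coneD_homotopy hD x (hright i)
      refine ⟨∑ i, p i (N • h i, w i), ?_⟩
      rw [map_sum]
      exact Finset.sum_congr rfl fun i _ => by rw [← hp, hq, map_zero, add_zero]
    obtain ⟨p, hp'⟩ := hbd
    rw [hp', ← eq_sub_iff_add_eq, ← map_sub] at hcw
    set r := (u, v) - p with hr
    have hr1 : D r.1 = 0 := by
      have := congrArg Prod.fst hcw
      simpa [Prod.fst_sum] using this.symm
    have hr2 : ∑ i, c (Fin.castAdd n i) • h i = x • r.1 - D r.2 := by
      have := congrArg Prod.snd hcw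
      simpa only [Prod.snd_sum, Prod.smul_snd, coneD_apply] using this
    obtain ⟨d, t, ht⟩ := h1 _ hr1
    have hleft : ∀ i, c (Fin.castAdd n i) - d i * x ∈ I := by
      refine h2 _ (x • t - r.2) ?_
      simp only [sub_smul, Finset.sum_sub_distrib, hr2, map_sub, map_smul]
      rw [ht, smul_add, Finset.smul_sum]
      simp only [mul_comm _ x, mul_smul]
      abel
    intro i
    refine Fin.addCases (fun i => ?_) hright i
    rw [← sub_add_cancel (c (Fin.castAdd n i)) (d i * x)]
    exact add_mem (Ideal.mem_sup_left (hleft i))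
      (Ideal.mem_sup_right (Ideal.mul_mem_left _ _ (Ideal.mem_span_singleton_self x)))

end Abstract

/-! ### Augmentation ideals and norm elements in group rings -/

section GroupRing

open MonoidAlgebra

variable {O : Type*} [CommRing O] {H : Type*} [CommGroup H]

theorem of_sub_one_mem {m : ℕ} (g : Fin m → H) {h : H} (hh : h ∈ Subgroup.closure (Set.range g)) :
    of O H h - 1 ∈ Ideal.span (Set.range fun j => of O H (g j) - 1) := by
  induction hh using Subgroup.closure_induction with
  | mem x hx => obtain ⟨j, rfl⟩ := hx; exact Ideal.subset_span ⟨j, rfl⟩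
  | one => rw [map_one, sub_self]; exact zero_mem _
  | mul x y _ _ hx hy =>
    have : of O H (x * y) - 1 = of O H y * (of O H x - 1) + (of O H y - 1) := by
      rw [map_mul]; ring
    rw [this]; exact add_mem (Ideal.mul_mem_left _ _ hx) hy
  | inv x _ hx =>
    have : of O H x⁻¹ - 1 = -of O H x⁻¹ * (of O H x - 1) := by
      rw [mul_sub, neg_mul, ← map_mul, inv_mul_cancel, map_one]; ring
    rw [this]; exact Ideal.mul_mem_left _ _ hx

variable (O) in
/-- The projection `O[H] → O[H ⧸ G]`. -/
noncomputable def quotHom (G : Subgroup H) : MonoidAlgebra O H →+* MonoidAlgebra O (H ⧸ G) :=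
  mapDomainRingHom O (QuotientGroup.mk' G)

variable (O) in
/-- The additive section of `O[H] → O[H ⧸ G]` sending each coset to its chosen representative. -/
noncomputable def repMap (G : Subgroup H) (c : MonoidAlgebra O (H ⧸ G)) : MonoidAlgebra O H :=
  mapDomain Quotient.out c

@[simp] theorem quotHom_of (G : Subgroup H) (h : H) :
    quotHom O G (of O H h) = of O (H ⧸ G) (h : H ⧸ G) := by
  simp [quotHom]

theorem repMap_quotHom_of (G : Subgroup H) (h : H) :
    repMap O G (quotHom O G (of O H h)) = of O H (h : H ⧸ G).out := by
  rw [quotHom_of, repMap, of_apply, mapDomain_single, of_apply]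

theorem sub_repMap_mem {m : ℕ} (g : Fin m → H) (c : MonoidAlgebra O H) :
    c - repMap O (Subgroup.closure (Set.range g)) (quotHom O _ c) ∈
      Ideal.span (Set.range fun j => of O H (g j) - 1) := by
  induction c using MonoidAlgebra.induction_on with
  | of h =>
    rw [repMap_quotHom_of]
    set r := (h : H ⧸ Subgroup.closure (Set.range g)).out with hr
    have hmem : r⁻¹ * h ∈ Subgroup.closure (Set.range g) :=
      QuotientGroup.eq.1 (by rw [hr, QuotientGroup.out_eq'])
    have : of O H h - of O H r = of O H r * (of O H (r⁻¹ * h) - 1) := by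
      rw [mul_sub, ← map_mul, mul_inv_cancel_left, mul_one]
    rw [this]; exact Ideal.mul_mem_left _ _ (of_sub_one_mem g hmem)
  | add x y hx hy =>
    simp only [repMap, map_add, mapDomain_add] at hx hy ⊢
    convert add_mem hx hy using 1; ring
  | smul r x hx =>
    have : quotHom O (Subgroup.closure (Set.range g)) (r • x) = r • quotHom O _ x :=
      mapDomain_smul ..
    simp only [repMap, this, mapDomain_smul, ← smul_sub] at hx ⊢
    rw [← algebraMap_smul (MonoidAlgebra O H)]
    exact Ideal.mul_mem_left _ _ hx

/-- The ideal generated by the `g j - 1` is the kernel of `O[H] → O[H ⧸ ⟨g⟩]`. -/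
theorem mem_span_iff {m : ℕ} (g : Fin m → H) (c : MonoidAlgebra O H) :
    c ∈ Ideal.span (Set.range fun j => of O H (g j) - 1) ↔
      quotHom O (Subgroup.closure (Set.range g)) c = 0 := by
  refine ⟨fun hc => ?_, fun hc => ?_⟩
  · rw [← RingHom.mem_ker]
    refine Ideal.span_le.2 ?_ hc
    rintro _ ⟨j, rfl⟩
    have : ((g j : H) : H ⧸ Subgroup.closure (Set.range g)) = 1 :=
      (QuotientGroup.eq_one_iff _).2 (Subgroup.subset_closure ⟨j, rfl⟩)
    simp only [SetLike.mem_coe, RingHom.mem_ker, map_sub, map_one, quotHom_of, this, sub_self]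
  · have := sub_repMap_mem g c
    rwa [hc, repMap, mapDomain_zero, sub_zero] at this

theorem quotHom_surjective (G : Subgroup H) : Function.Surjective (quotHom O G) := fun c => by
  induction c using MonoidAlgebra.induction_on with
  | of y =>
    obtain ⟨h, rfl⟩ := QuotientGroup.mk_surjective y
    exact ⟨of O H h, quotHom_of G h⟩
  | add x y hx hy =>
    obtain ⟨x, rfl⟩ := hx
    obtain ⟨y, rfl⟩ := hy
    exact ⟨x + y, map_add ..⟩
  | smul r x hx =>
    obtain ⟨x, rfl⟩ := hx
    exact ⟨r • x, mapDomain_smul ..⟩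

/-- The quotient of `O[H]` by the ideal generated by the `g j - 1` is `O`-torsion-free. -/
theorem smul_mem_span [IsDomain O] {m : ℕ} (g : Fin m → H) {r : O} (hr : r ≠ 0)
    {c : MonoidAlgebra O H}
    (hc : r • c ∈ Ideal.span (Set.range fun j => of O H (g j) - 1)) :
    c ∈ Ideal.span (Set.range fun j => of O H (g j) - 1) := by
  rw [mem_span_iff] at hc ⊢
  have : quotHom O (Subgroup.closure (Set.range g)) (r • c) = r • quotHom O _ c :=
    mapDomain_smul ..
  rw [this] at hc
  ext y
  have := congrArg (fun a => a.coeff y) hc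
  simpa [hr] using this

variable (O) in
/-- The norm element `1 + q + ⋯ + q ^ (n - 1)`, where `n` is the order of `q`. -/
noncomputable def normElt (q : H) : MonoidAlgebra O H :=
  ∑ k ∈ Finset.range (orderOf q), of O H (q ^ k)

theorem mul_normElt_coeff (c : MonoidAlgebra O H) (q y : H) :
    (c * normElt O q).coeff y = ∑ k ∈ Finset.range (orderOf q), c.coeff (y * (q ^ k)⁻¹) := by
  simp only [normElt, Finset.mul_sum, coeff_sum, Finsupp.finsetSum_apply, of_apply,
    coeff_mul_single_apply, mul_one]

theorem sub_one_mul_normElt (q : H) : (of O H q - 1) * normElt O q = 0 := by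
  simp only [normElt, map_pow]
  rw [mul_geom_sum, ← map_pow, pow_orderOf_eq_one, map_one, sub_self]

/-- The orbit of `y` under `⟨q⟩` meets the set of chosen representatives in exactly one point, so only
one term of an orbit sum of a function supported on representatives survives. -/
theorem sum_transversal [Finite H] (q : H) (G : Subgroup H) (hG : G = Subgroup.zpowers q)
    (f : H → O) (hf : ∀ y : H, (y : H ⧸ G).out ≠ y → f y = 0) (y : H) :
    ∑ k ∈ Finset.range (orderOf q), f (y * (q ^ k)⁻¹) = f (y : H ⧸ G).out := by
  classical
  subst hG
  have hmem : (y : H ⧸ Subgroup.zpowers q).out⁻¹ * y ∈ Subgroup.zpowers q :=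
    QuotientGroup.eq.1 (by rw [QuotientGroup.out_eq'])
  obtain ⟨k₀, hk₀, hk⟩ : ∃ k ∈ Finset.range (orderOf q),
      q ^ k = (y : H ⧸ Subgroup.zpowers q).out⁻¹ * y := by
    have := (isOfFinOrder_of_finite q).mem_zpowers_iff_mem_range_orderOf.1 hmem
    simpa using this
  have hout : y * (q ^ k₀)⁻¹ = (y : H ⧸ Subgroup.zpowers q).out := by
    rw [hk]; group
  rw [Finset.sum_eq_single_of_mem k₀ hk₀, hout]
  intro k hk hne
  apply hf
  intro hcon
  have hcls : ((y * (q ^ k)⁻¹ : H) : H ⧸ Subgroup.zpowers q) = y := by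
    refine QuotientGroup.eq.2 ?_
    rw [mul_inv_rev, inv_inv, inv_mul_cancel_right]
    exact Subgroup.npow_mem_zpowers q k
  rw [hcls, ← hout] at hcon
  exact hne (pow_injOn_Iio_orderOf (by simpa using hk) (by simpa using hk₀)
    (inv_injective (mul_left_cancel hcon)).symm)

/-- The annihilator of `q - 1` is generated by the norm element: a `q`-invariant `c` is the norm of
its restriction to coset representatives. -/
theorem exists_mul_normElt [Finite H] (q : H) (c : MonoidAlgebra O H)
    (hc : c * (of O H q - 1) = 0) : ∃ e, c = e * normElt O q := by
  classical
  have hinv : ∀ y, c.coeff (y * q⁻¹) = c.coeff y := fun y => by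
    have := congrArg (fun a => a.coeff y) hc
    simp only [mul_sub, mul_one, of_apply, coeff_sub, Finsupp.sub_apply, coeff_mul_single_apply,
      coeff_zero, Finsupp.zero_apply] at this
    exact sub_eq_zero.1 this
  have hinv' : ∀ (k : ℕ) y, c.coeff (y * (q ^ k)⁻¹) = c.coeff y := fun k => by
    induction k with
    | zero => simp
    | succ k ih => intro y; rw [pow_succ, mul_inv_rev, mul_comm q⁻¹, ← mul_assoc, hinv, ih]
  let G := Subgroup.zpowers q
  refine ⟨ofCoeff (c.coeff.filter fun y : H => (y : H ⧸ G).out = y), ?_⟩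
  ext y
  rw [mul_normElt_coeff]
  change c.coeff y = ∑ k ∈ Finset.range (orderOf q),
    (c.coeff.filter fun y : H => (y : H ⧸ G).out = y) (y * (q ^ k)⁻¹)
  rw [sum_transversal q G rfl (c.coeff.filter fun y : H => (y : H ⧸ G).out = y)
      (fun y hy => Finsupp.filter_apply_neg _ _ hy),
    Finsupp.filter_apply_pos _ _ (by rw [QuotientGroup.out_eq'])]
  have hmem : (y : H ⧸ G).out⁻¹ * y ∈ Subgroup.zpowers q :=
    QuotientGroup.eq.1 (by rw [QuotientGroup.out_eq'])
  obtain ⟨k, hk⟩ := mem_powers_iff_mem_zpowers.2 hmem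
  have := hinv' k y
  simp only at hk
  rw [← this, hk]
  congr 1; group

/-- The annihilator of the norm element is generated by `q - 1`: modulo `q - 1`, every element is
congruent to one supported on coset representatives, and multiplication by the norm is injective
on such elements. -/
theorem exists_mul_sub_one [Finite H] (q : H) (c : MonoidAlgebra O H)
    (hc : c * normElt O q = 0) : ∃ e, c = e * (of O H q - 1) := by
  let g : Fin 1 → H := fun _ => q
  have hG : Subgroup.closure (Set.range g) = Subgroup.zpowers q := by
    rw [Set.range_const, Subgroup.zpowers_eq_closure]
  have hs := sub_repMap_mem (O := O) g c
  have hI : (Set.range fun j => of O H (g j) - 1) = {of O H q - 1} := by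
    simp only [g, Set.range_const]
  rw [hI] at hs
  obtain ⟨e, he⟩ := Ideal.mem_span_singleton'.1 hs
  refine ⟨e, ?_⟩
  set G := Subgroup.closure (Set.range g)
  set d := repMap O G (quotHom O G c) with hd
  have hdN : d * normElt O q = 0 := by
    have : d = c - e * (of O H q - 1) := by rw [he]; ring
    rw [this, sub_mul, hc, mul_assoc, sub_one_mul_normElt, mul_zero, sub_zero]
  have hd0 : ∀ y : H, (y : H ⧸ G).out ≠ y → d.coeff y = 0 := fun y hy => by
    refine Finsupp.mapDomain_of_notMem_range _ _ ?_
    rintro ⟨z, rfl⟩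
    exact hy (by rw [QuotientGroup.out_eq'])
  have : d = 0 := by
    ext y
    by_cases hy : (y : H ⧸ G).out = y
    · have h1 := congrArg (fun a => a.coeff y) hdN
      simp only [mul_normElt_coeff] at h1
      rw [sum_transversal q G hG _ hd0, hy] at h1
      exact h1
    · rw [hd0 y hy]; rfl
  rw [he, this, sub_zero]

end GroupRing

/-! ### The total Koszul complex -/

section Total

variable {A : Type*} [CommRing A]

/-- The Koszul differential on the direct sum of all degrees, realized as functions on all subsets
of `Fin m`. -/
noncomputable def totalD {m : ℕ} (a : Fin m → A) :
    (Finset (Fin m) → A) →ₗ[A] (Finset (Fin m) → A) where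
  toFun f T := ∑ j ∈ T, (-1 : A) ^ (T.filter (fun k => k < j)).card * a j * f (T.erase j)
  map_add' f g := by
    funext T
    simp only [Pi.add_apply, mul_add, Finset.sum_add_distrib]
  map_smul' c f := by
    funext T
    simp only [Pi.smul_apply, RingHom.id_apply, Finset.smul_sum, mul_smul_comm]

theorem totalD_apply {m : ℕ} (a : Fin m → A) (f : Finset (Fin m) → A) (T : Finset (Fin m)) :
    totalD a f T =
      ∑ j ∈ T, (-1 : A) ^ (T.filter (fun k => k < j)).card * a j * f (T.erase j) := rfl

/-- The shift of a subset of `Fin m` to a subset of `Fin (m + 1)` avoiding `0`. -/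
def succSet {m : ℕ} (T : Finset (Fin m)) : Finset (Fin (m + 1)) := T.map (Fin.succEmb m)

/-- The subset of `Fin m` obtained from a subset of `Fin (m + 1)` by dropping `0` and shifting. -/
def predSet {m : ℕ} (T : Finset (Fin (m + 1))) : Finset (Fin m) :=
  Finset.univ.filter fun j => j.succ ∈ T

theorem zero_notMem_succSet {m : ℕ} (T : Finset (Fin m)) : (0 : Fin (m + 1)) ∉ succSet T := by
  simp [succSet]

@[simp] theorem succ_mem_succSet {m : ℕ} (T : Finset (Fin m)) (j : Fin m) :
    j.succ ∈ succSet T ↔ j ∈ T := by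
  simp [succSet]

/-- The decomposition of the Koszul complex on `m + 1` elements according to whether a subset
contains `0`. -/
def splitEquiv (A : Type*) [CommRing A] (m : ℕ) :
    (Finset (Fin (m + 1)) → A) ≃ₗ[A] (Finset (Fin m) → A) × (Finset (Fin m) → A) where
  toFun F := (fun T => F (succSet T), fun T => F (insert 0 (succSet T)))
  invFun p T := if 0 ∈ T then p.2 (predSet T) else p.1 (predSet T)
  map_add' _ _ := rfl
  map_smul' _ _ := rfl
  left_inv F := by
    funext T
    dsimp only
    split_ifs with h
    · congr 1
      ext j
      refine Fin.cases ?_ (fun j => ?_) j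
      · simp [h]
      · simp [predSet, Fin.succ_ne_zero]
    · congr 1
      ext j
      refine Fin.cases ?_ (fun j => ?_) j
      · simp [h, zero_notMem_succSet]
      · simp [predSet]
  right_inv p := by
    ext T
    · simp [zero_notMem_succSet, predSet]
    · simp [predSet, Fin.succ_ne_zero]

/-- The Koszul complex on `a 0, …, a m` is the cone of `a 0` on the Koszul complex on
`a 1, …, a m`. -/
theorem splitEquiv_totalD {m : ℕ} (a : Fin (m + 1) → A) (F : Finset (Fin (m + 1)) → A) :
    splitEquiv A m (totalD a F) =
      coneD (a 0) (totalD fun j => a j.succ) (splitEquiv A m F) := by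
  ext T
  · simp only [splitEquiv, LinearEquiv.coe_mk, LinearMap.coe_mk, AddHom.coe_mk, coneD_apply,
      totalD_apply]
    rw [succSet, Finset.sum_map]
    refine Finset.sum_congr rfl fun j _ => ?_
    rw [Finset.filter_map, Finset.card_map, succSet, Finset.map_erase]
    simp [Function.comp_def]
  · simp only [splitEquiv, LinearEquiv.coe_mk, LinearMap.coe_mk, AddHom.coe_mk, coneD_apply,
      totalD_apply, Pi.sub_apply, Pi.smul_apply, smul_eq_mul]
    rw [Finset.sum_insert (zero_notMem_succSet T), sub_eq_add_neg, ← Finset.sum_neg_distrib]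
    congr 1
    · rw [Finset.erase_insert (zero_notMem_succSet T)]
      simp
    · rw [succSet, Finset.sum_map]
      refine Finset.sum_congr rfl fun j _ => ?_
      have h0 : (0 : Fin (m + 1)) ∉ (Finset.map (Fin.succEmb m) T).filter
          (fun k => k < Fin.succEmb m j) :=
        fun h => zero_notMem_succSet T (Finset.mem_filter.1 h).1
      have h1 : ((insert 0 (Finset.map (Fin.succEmb m) T)).filter
          (fun k => k < Fin.succEmb m j)).card = (T.filter (fun k => k < j)).card + 1 := by
        rw [Finset.filter_insert, if_pos (by simp), Finset.card_insert_of_notMem h0,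
          Finset.filter_map, Finset.card_map]
        simp [Function.comp_def]
      have h2 : (insert 0 (Finset.map (Fin.succEmb m) T)).erase (Fin.succEmb m j) =
          insert 0 (succSet (T.erase j)) := by
        rw [Finset.erase_insert_of_ne (by simp [Fin.succ_ne_zero, eq_comm]), succSet,
          Finset.map_erase]
      rw [h1, h2, pow_succ]
      simp

theorem cohomFree_totalD_zero (a : Fin 0 → A) : CohomFree (⊥ : Ideal A) (totalD a) := by
  have h0 : totalD a = 0 := by
    ext f T
    simp [totalD_apply, Finset.eq_empty_of_isEmpty]
  refine ⟨fun z => by simp [h0], fun y hy => ⟨0, fun z => ?_⟩, 1, fun _ _ => 1,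
    fun i => by simp [h0], fun z _ => ⟨fun _ => z ∅, 0, ?_⟩, fun c w hw i => ?_⟩
  · simp [(Submodule.mem_bot A).1 hy]
  · funext T
    simp [Finset.eq_empty_of_isEmpty T]
  · have := congrFun hw ∅
    rw [Subsingleton.elim i 0]
    simpa [h0] using this

end Total

/-- The total cohomology of the Koszul complex on the `g j - 1` is finite free over
`O[H] ⧸ (g j - 1) ≅ O[H ⧸ ⟨g⟩]`. -/
theorem cohomFree_totalD_groupRing (O : Type*) [CommRing O] {H : Type*} [CommGroup H] [Finite H]
    (m : ℕ) (g : Fin m → H) :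
    CohomFree (Ideal.span (Set.range fun j => MonoidAlgebra.of O H (g j) - 1))
      (totalD fun j => MonoidAlgebra.of O H (g j) - 1) := by
  induction m with
  | zero => simpa using cohomFree_totalD_zero fun j => MonoidAlgebra.of O H (g j) - 1
  | succ m ih =>
    have ih := ih fun j => g j.succ
    set I := Ideal.span (Set.range fun j : Fin m => MonoidAlgebra.of O H (g j.succ) - 1)
    let G := Subgroup.closure (Set.range fun j : Fin m => g j.succ)
    have hmem : ∀ c, c ∈ I ↔ quotHom O G c = 0 := mem_span_iff _
    let x := MonoidAlgebra.of O H (g 0) - 1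
    have hx : quotHom O G x = MonoidAlgebra.of O (H ⧸ G) (g 0 : H ⧸ G) - 1 := by
      rw [map_sub, quotHom_of, map_one]
    -- The norm is taken in `H ⧸ G`: the order of `g 0` modulo `G` is what matters, not its order
    -- in `H`.
    obtain ⟨N, hN⟩ := quotHom_surjective (O := O) G (normElt O (g 0 : H ⧸ G))
    have hspan : Ideal.span (Set.range fun j => MonoidAlgebra.of O H (g j) - 1) =
        I ⊔ Ideal.span {x} := by
      rw [Fin.range_fin_succ, Ideal.span_insert, sup_comm]
      rfl
    rw [hspan]
    refine CohomFree.congr (ih.cone (x := x) (N := N) ?_ ?_ ?_) _ (splitEquiv _ m)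
      fun z => splitEquiv_totalD _ z
    · rw [hmem, map_mul, hx, hN, sub_one_mul_normElt]
    · intro c hc
      rw [hmem, map_mul, hx] at hc
      obtain ⟨e', he'⟩ := exists_mul_normElt _ _ hc
      obtain ⟨e, rfl⟩ := quotHom_surjective G e'
      exact ⟨e, by rw [hmem, map_sub, map_mul, hN, ← he', sub_self]⟩
    · intro c hc
      rw [hmem, map_mul, hN] at hc
      obtain ⟨e', he'⟩ := exists_mul_sub_one _ _ hc
      obtain ⟨e, rfl⟩ := quotHom_surjective G e'
      rw [← sub_add_cancel c (e * x)]
      refine add_mem (Ideal.mem_sup_left ?_) (Ideal.mem_sup_right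
        (Ideal.mul_mem_left _ _ (Ideal.mem_span_singleton_self x)))
      rw [hmem, map_sub, map_mul, hx, ← he', sub_self]

/-! ### From the total complex to the graded pieces -/

section Graded

variable {O : Type*} [CommRing O] {A : Type*} [CommRing A] [Algebra O A] {m : ℕ}

/-- A cochain of degree `i`, extended by zero to a total cochain. -/
def extendZero {i : ℤ} (f : KT A m i) (T : Finset (Fin m)) : A :=
  if h : (T.card : ℤ) = i then f ⟨T, h⟩ else 0

theorem extendZero_coe {i : ℤ} (f : KT A m i) (T : KIdx m i) : extendZero f T.1 = f T :=
  dif_pos T.2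

theorem card_erase_cast {T : Finset (Fin m)} {j : Fin m} (hj : j ∈ T) :
    ((T.erase j).card : ℤ) = T.card - 1 := by
  have := Finset.card_erase_add_one hj
  omega

/-- The differential of the degree `i` component of a total cochain `F` is the degree `i + 1`
component of the differential of `F`. -/
theorem kd_apply (a : Fin m → A) {i j : ℤ} (h : j = i + 1) (F : Finset (Fin m) → A)
    (T : KIdx m j) :
    kd O A m a i j (fun S => F S.1) T = totalD a F T.1 := by
  subst h
  simp only [kd, dif_pos, kdAux, LinearMap.coe_mk, AddHom.coe_mk, totalD_apply]
  exact Finset.sum_attach T.1 fun j =>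
    (-1 : A) ^ (T.1.filter (fun k => k < j)).card * a j * F (T.1.erase j)

theorem totalD_extendZero (a : Fin m → A) {i j : ℤ} (h : j = i + 1) (f : KT A m i) :
    totalD a (extendZero f) = extendZero (kd O A m a i j f) := by
  have hf : (fun S : KIdx m i => extendZero f S.1) = f := funext (extendZero_coe f)
  funext T
  by_cases hT : (T.card : ℤ) = j
  · rw [← kd_apply (O := O) a h (extendZero f) ⟨T, hT⟩, hf, extendZero, dif_pos hT]
  · rw [extendZero, dif_neg hT, totalD_apply]
    refine Finset.sum_eq_zero fun k hk => ?_
    rw [extendZero, dif_neg, mul_zero]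
    rw [card_erase_cast hk]; omega

end Graded

/-- Let `O` be a principal ideal domain whose fraction field has characteristic
zero (equivalently, `O` is a PID of characteristic zero), let `H` be a finite abelian group,
and let `g 1, …, g m ∈ H`. Then for every `i`, the `i`-th cohomology module of the Koszul
complex `Z(g 1 - 1, …, g m - 1)` of `O[H]`-modules (the tensor product over `O[H]` of the
two-term complexes `O[H] → O[H]` given by multiplication by `g j - 1`, realized above in
degrees `0, …, m`) is a finitely generated free `O`-module. -/
theorem stmt4 (O : Type*) [CommRing O] [IsDomain O] [IsPrincipalIdealRing O] [CharZero O]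
    (H : Type*) [CommGroup H] [Finite H] (m : ℕ) (g : Fin m → H) (i : ℤ) :
    Module.Free O
      (koszulCohomology O (MonoidAlgebra O H) m
        (fun j => MonoidAlgebra.of O H (g j) - 1) i) ∧
    Module.Finite O
      (koszulCohomology O (MonoidAlgebra O H) m
        (fun j => MonoidAlgebra.of O H (g j) - 1) i) := by
  have hfinA : Module.Finite O (MonoidAlgebra O H) := inferInstance
  have hfin : Module.Finite O (koszulCohomology O (MonoidAlgebra O H) m
      (fun j => MonoidAlgebra.of O H (g j) - 1) i) := inferInstance
  -- Over a principal ideal domain it remains to show that the cohomology is torsion-free.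
  refine ⟨?_, hfin⟩
  suffices Module.IsTorsionFree O (koszulCohomology O (MonoidAlgebra O H) m
      (fun j => MonoidAlgebra.of O H (g j) - 1) i) from inferInstance
  have hF := cohomFree_totalD_groupRing O m g
  obtain ⟨n, h, h0, h1, h2⟩ := hF.basis
  refine Module.IsTorsionFree.of_smul_eq_zero fun r y hry => ?_
  by_contra! hcon
  obtain ⟨hr, hy⟩ := hcon
  obtain ⟨⟨z, hz⟩, rfl⟩ := Submodule.Quotient.mk_surjective _ y
  apply hy
  rw [← Submodule.Quotient.mk_smul, Submodule.Quotient.mk_eq_zero] at hry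
  rw [Submodule.Quotient.mk_eq_zero]
  obtain ⟨w, hw⟩ := hry
  replace hw : kd O _ m _ (i - 1) i w = r • z := hw
  have hi : i = i - 1 + 1 := by ring
  have hsm : extendZero (r • z) = r • extendZero z := by
    funext T
    simp only [extendZero, Pi.smul_apply]
    split_ifs <;> simp
  have hDz : totalD (fun j => MonoidAlgebra.of O H (g j) - 1) (extendZero z) = 0 := by
    rw [totalD_extendZero (O := O) _ rfl, LinearMap.mem_ker.1 hz]
    funext T; simp [extendZero]
  have hDw : totalD (fun j => MonoidAlgebra.of O H (g j) - 1) (extendZero w) =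
      r • extendZero z := by
    rw [totalD_extendZero (O := O) _ hi, hw, hsm]
  obtain ⟨c, u, hu⟩ := h1 _ hDz
  have hc : ∀ k, c k ∈ Ideal.span (Set.range fun j => MonoidAlgebra.of O H (g j) - 1) := by
    refine fun k => smul_mem_span g hr (h2 (fun k => r • c k) (extendZero w - r • u) ?_ k)
    rw [map_sub, hDw, LinearMap.map_smul_of_tower, ← smul_sub]
    nth_rw 1 [hu]
    rw [add_sub_cancel_right, Finset.smul_sum]
    simp only [smul_assoc]
  obtain ⟨v, hv⟩ := hF.kill_sum hc h0
  refine ⟨fun S => (v + u) S.1, ?_⟩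
  funext T
  rw [kd_apply _ hi, map_add, ← hv, ← hu, extendZero_coe]
  rfl
end

section
/- Let A and B be groups and X a nonempty set equipped with a left A-action and a right B-action that commute: (a·x)·b = a·(x·b) for all a ∈ A, b ∈ B, x ∈ X. Assume both actions are transitive. Then for every x ∈ X, the stabilizer Stab_A(x) equals the kernel of the A-action on X (in particular, it is a normal subgroup of A independent of x), and there is a surjective group homomorphism from B onto the opposite group of A/Stab_A(x). In particular, if B is abelian then A/Stab_A(x) is an abelian quotient of A isomorphic to a quotient group of B. -/
/-!
An element of `A` fixing one point `x` fixes every `x · b`, because the actions commute, and hence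
all of `X`, because `B` is transitive. So point stabilizers in `A` are the kernel `K` of the action,
and the class in `A ⧸ K` of an element is determined by its value at a single point.

Fix `x`. Transitivity of `A` gives for each `b` an `a` with `a • (x · b) = x`, unique modulo `K`.
The assignment `b ↦ a` reverses products, so it is a homomorphism from `B` to `(A ⧸ K)ᵐᵒᵖ`; it is
surjective because `B` is transitive. Commutativity of `B` then passes to the quotient.
-/

theorem stabilizer_eq_ker_of_smulCommClass (A C X : Type*) [Group A] [Group C]
    [MulAction A X] [MulAction C X] [SMulCommClass A C X] [MulAction.IsPretransitive C X] (x : X) :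
    MulAction.stabilizer A x = (MulAction.toPermHom A X).ker := by
  ext a
  rw [MulAction.mem_stabilizer_iff, MonoidHom.mem_ker]
  constructor
  · intro h
    ext y
    obtain ⟨c, rfl⟩ := MulAction.exists_smul_eq C x y
    simp [smul_comm a c x, h]
  · intro h
    simpa using congrArg (fun e : Equiv.Perm X => e x) h

/-- Let `A` and `B` be groups and `X` a nonempty set with a left `A`-action and a
right `B`-action (encoded as a left action of `Bᵐᵒᵖ`) that commute with each other. Assume both
actions are transitive. Then for every `x : X` the stabilizer of `x` in `A` equals the kernel of
the `A`-action on `X` (in particular it is a normal subgroup of `A` independent of `x`), and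
there is a surjective group homomorphism from `B` onto the opposite group of the quotient of `A`
by this stabilizer. In particular, if `B` is abelian then this quotient of `A` is abelian. -/
theorem stmt10 (A B X : Type*) [Group A] [Group B] [Nonempty X]
    [MulAction A X] [MulAction Bᵐᵒᵖ X] [SMulCommClass A Bᵐᵒᵖ X]
    [MulAction.IsPretransitive A X] [MulAction.IsPretransitive Bᵐᵒᵖ X] :
    (∀ x : X, MulAction.stabilizer A x = (MulAction.toPermHom A X).ker) ∧
    (∀ x : X, (MulAction.stabilizer A x).Normal) ∧
    (∃ f : B →* (A ⧸ (MulAction.toPermHom A X).ker)ᵐᵒᵖ, Function.Surjective f) ∧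
    ((∀ b₁ b₂ : B, b₁ * b₂ = b₂ * b₁) →
      ∀ y z : A ⧸ (MulAction.toPermHom A X).ker, y * z = z * y) := by
  have hstab : ∀ x : X, MulAction.stabilizer A x = (MulAction.toPermHom A X).ker :=
    stabilizer_eq_ker_of_smulCommClass A Bᵐᵒᵖ X
  have hf : ∃ f : B →* (A ⧸ (MulAction.toPermHom A X).ker)ᵐᵒᵖ, Function.Surjective f := by
    obtain ⟨x⟩ := ‹Nonempty X›
    have hmk : ∀ (a a' : A) (y : X), a • y = a' • y →
        (a : A ⧸ (MulAction.toPermHom A X).ker) = a' := by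
      intro a a' y h
      rw [QuotientGroup.eq, ← hstab y, MulAction.mem_stabilizer_iff, mul_smul, ← h,
        inv_smul_smul]
    choose g hg using fun b : B =>
      MulAction.exists_smul_eq A (MulOpposite.op b • x) x
    refine ⟨MonoidHom.mk' (fun b => MulOpposite.op (g b : A ⧸ (MulAction.toPermHom A X).ker)) ?_,
      ?_⟩
    · intro b₁ b₂
      rw [← MulOpposite.op_mul, ← QuotientGroup.mk_mul]
      refine congrArg MulOpposite.op (hmk _ _ (MulOpposite.op (b₁ * b₂) • x) ?_)
      rw [hg, MulOpposite.op_mul, mul_smul, mul_smul, smul_comm (g b₁), hg, hg]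
    · intro q
      obtain ⟨a, ha⟩ := QuotientGroup.mk_surjective q.unop
      obtain ⟨b, hb⟩ := MulAction.exists_smul_eq Bᵐᵒᵖ x (a⁻¹ • x)
      refine ⟨b.unop, MulOpposite.unop_injective ?_⟩
      rw [← ha]
      refine hmk _ _ (b • x) ?_
      exact (hg b.unop).trans (by rw [hb, smul_inv_smul])
  refine ⟨hstab, fun x => hstab x ▸ inferInstance, hf, fun hB y z => ?_⟩
  obtain ⟨f, hf⟩ := hf
  obtain ⟨b, hb⟩ := hf (MulOpposite.op y)
  obtain ⟨c, hc⟩ := hf (MulOpposite.op z)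
  apply MulOpposite.op_injective
  rw [MulOpposite.op_mul, MulOpposite.op_mul, ← hb, ← hc, ← map_mul, ← map_mul, hB]
end
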